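/- Let (W, S) be an arbitrary Coxeter system and let w ∈ W_c be fully commutative. Then |𝓛(w)| ≤ n(w) and |𝓡(w)| ≤ n(w). -/

import Mathlib

open CoxeterSystem

variable {B W : Type*} [Group W] {M : CoxeterMatrix B} (cs : CoxeterSystem M W)

/-- `m(s,t) ≥ 3`: `s` and `t` are distinct noncommuting generators
(`M s t = 0` encodes `m(s,t) = ∞`). -/
def Noncomm (M : CoxeterMatrix B) (s t : B) : Prop := M s t = 0 ∨ 3 ≤ M s t

/-- The longest element `w_{st}` of the rank-2 parabolic subgroup `⟨s,t⟩`
(meaningful when `3 ≤ M s t < ∞`). -/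
def longest (s t : B) : W := cs.wordProd (alternatingWord s t (M s t))

/-- `w` is complex: it admits a reduced factorization `x₁ · w_{st} · x₂` where `w_{st}`
is the longest element of a rank-2 parabolic subgroup `⟨s,t⟩` with `3 ≤ m(s,t) < ∞`. -/
def IsComplex (w : W) : Prop :=
  ∃ s t : B, 3 ≤ M s t ∧ ∃ x₁ x₂ : W,
    w = x₁ * longest cs s t * x₂ ∧
    cs.length w = cs.length x₁ + cs.length (longest cs s t : W) + cs.length x₂

/-- `w` is fully commutative, i.e. `w ∈ W_c`. -/
def FullyComm (w : W) : Prop := ¬ IsComplex cs w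

/-- `x` is weakly complex: `x` is complex and `x = s·u` reduced with `u` fully commutative. -/
def IsWeaklyComplex (x : W) : Prop :=
  IsComplex cs x ∧ ∃ (s : B) (u : W), FullyComm cs u ∧ x = cs.simple s * u ∧
    cs.length x = 1 + cs.length u

/-- The alternating product `t s t s ⋯` with `k` factors, beginning with `t`. -/
def altProd (t s : B) (k : ℕ) : W :=
  cs.wordProd ((List.range k).map (fun i => if i % 2 = 0 then t else s))

/-- The left descent set `𝓛(w)`. -/
def leftDescents (w : W) : Set B := {i | cs.IsLeftDescent w i}

/-- The right descent set `𝓡(w)`. -/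
def rightDescents (w : W) : Set B := {i | cs.IsRightDescent w i}

/-- `w` is a reduced product of distinct pairwise commuting generators. -/
def IsCommProd (w : W) : Prop :=
  ∃ l : List B, l.Nodup ∧ (∀ u ∈ l, ∀ u' ∈ l, u ≠ u' → M u u' = 2) ∧
    cs.IsReduced l ∧ w = cs.wordProd l

/-- `y` is left star reducible to `x` with respect to the pair `{s,t}`:
`x` and `y` lie in the same left `{s,t}`-string and `ℓ(x) = ℓ(y) − 1`. -/
def LeftStarReducible (s t : B) (y x : W) : Prop :=
  Noncomm M s t ∧
  ((cs.IsLeftDescent y s ∧ ¬ cs.IsLeftDescent y t ∧ x = cs.simple s * y ∧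
      cs.IsLeftDescent x t) ∨
   (cs.IsLeftDescent y t ∧ ¬ cs.IsLeftDescent y s ∧ x = cs.simple t * y ∧
      cs.IsLeftDescent x s))

/-- `y` is right star reducible to `x` with respect to the pair `{s,t}`. -/
def RightStarReducible (s t : B) (y x : W) : Prop :=
  Noncomm M s t ∧
  ((cs.IsRightDescent y s ∧ ¬ cs.IsRightDescent y t ∧ x = y * cs.simple s ∧
      cs.IsRightDescent x t) ∨
   (cs.IsRightDescent y t ∧ ¬ cs.IsRightDescent y s ∧ x = y * cs.simple t ∧
      cs.IsRightDescent x s))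

/-- `y` is star reducible to `x`: there is a (possibly empty) chain of left and right
star reductions from `y` to `x`. -/
def StarReducible (y x : W) : Prop :=
  Relation.ReflTransGen
    (fun a b => ∃ s t : B, LeftStarReducible cs s t a b ∨ RightStarReducible cs s t a b) y x

/-- Property F: every fully commutative element is star reducible to a reduced product of
distinct pairwise commuting generators. -/
def PropertyF : Prop := ∀ w : W, FullyComm cs w → ∃ x : W, StarReducible cs w x ∧ IsCommProd cs x

/-- `n(w)`: the maximum `k` such that `w` admits a reduced factorization `w = w₁·w₂·w₃`
with `w₂` a reduced product of `k` distinct pairwise commuting generators. -/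
noncomputable def nval (w : W) : ℕ :=
  sSup {k | ∃ w₁ w₂ w₃ : W, w = w₁ * w₂ * w₃ ∧
    cs.length w = cs.length w₁ + cs.length w₂ + cs.length w₃ ∧
    IsCommProd cs w₂ ∧ cs.length w₂ = k}

/-- The Bruhat order: `x ≤ w` iff some reduced word for `w` has a subword that is a
reduced word for `x`. -/
def BruhatLE (x w : W) : Prop :=
  ∃ l l' : List B, cs.IsReduced l ∧ cs.wordProd l = w ∧
    l'.Sublist l ∧ cs.IsReduced l' ∧ cs.wordProd l' = x

/-- `w = wI · wII` is the coset decomposition of `w` with respect to `I = {s,t}`: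
`wI ∈ W_I`, `𝓛(wII) ∩ I = ∅` and `ℓ(w) = ℓ(wI) + ℓ(wII)`. -/
def CosetDecompL (s t : B) (w wI wII : W) : Prop :=
  w = wI * wII ∧ wI ∈ Subgroup.closure {cs.simple s, cs.simple t} ∧
  ¬ cs.IsLeftDescent wII s ∧ ¬ cs.IsLeftDescent wII t ∧
  cs.length w = cs.length wI + cs.length wII

/-- `w = wII · wI` is the right coset decomposition of `w` with respect to `I = {s,t}`:
`wI ∈ W_I`, `𝓡(wII) ∩ I = ∅` and `ℓ(w) = ℓ(wII) + ℓ(wI)`. -/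
def CosetDecompR (s t : B) (w wII wI : W) : Prop :=
  w = wII * wI ∧ wI ∈ Subgroup.closure {cs.simple s, cs.simple t} ∧
  ¬ cs.IsRightDescent wII s ∧ ¬ cs.IsRightDescent wII t ∧
  cs.length w = cs.length wII + cs.length wI

/-- `k_ε(J) = (−1)^{|J ∩ ε⁻¹(0)|}` for a set `J` of generators. -/
noncomputable def kSet (ε : B → Bool) (J : Set B) : ℤ :=
  (-1) ^ (J ∩ {i | ε i = false}).ncard

/-- `k_ε(w) = k_ε(𝓛(w)) · k_ε(𝓡(w))`. -/
noncomputable def kElt (ε : B → Bool) (w : W) : ℤ :=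
  kSet ε (leftDescents cs w) * kSet ε (rightDescents cs w)

/-!
Let `η(w, t) = -1` if the reflection `t` is a left inversion of `w`, and `η(w, t) = 1` otherwise.
The cocycle rule `η(x y, t) = η(x, t) η(y, x⁻¹ t x)` shows that a left descent of `w` which is not
one of a reduced prefix `x` of `w` can be moved in front of `x`, giving a longer reduced prefix. So
every reduced word in the left descents of `w` is a prefix of `w`. Two noncommuting left descents
`s`, `t` would make `w_{st}` a prefix, or arbitrarily long alternating words if `m(s,t) = ∞`. Hence
the left descents of a fully commutative `w` commute, and their product is a reduced prefix of
length `|𝓛(w)|`. Inversion gives the bound for `𝓡(w)`.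

Alternating words of length at most `m(s,t)` are reduced because `st` has order exactly `m(s,t)`,
which is read off the geometric representation: on the plane spanned by two simple roots, the powers
of a product of two reflections are given by Chebyshev polynomials.
-/

section Reflections

open Polynomial.Chebyshev Module

section CommRing

variable {R V : Type*} [CommRing R] [AddCommGroup V] [Module R V] {x y : V} {f g : Dual R V}

theorem reflection_mul_reflection_sq_eq_one (hf : f x = 2) (hg : g y = 2) (hfy : f y = 0)
    (hgx : g x = 0) : (reflection hf * reflection hg) ^ 2 = 1 := by
  ext z
  simp only [pow_two, LinearEquiv.mul_apply, reflection_apply, map_sub, map_smul, hf, hg, hfy, hgx,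
    LinearEquiv.coe_one, id_eq]
  module

theorem eval_S_of_reflection_mul_reflection_zpow_eq_one (hf : f x = 2) (hg : g y = 2)
    (hxy : LinearIndependent R ![x, y]) {k : ℤ} (h : (reflection hf * reflection hg) ^ k = 1) :
    (S R k).eval (f y * g x - 2) + (S R (k - 1)).eval (f y * g x - 2) = 1 ∧
      (S R (k - 1)).eval (f y * g x - 2) * g x = 0 := by
  have hx := reflection_mul_reflection_zpow_apply_self hf hg k
  rw [h, LinearEquiv.coe_one, id_eq] at hx
  have hzero := LinearIndependent.pair_iff.mp hxy _ _ (show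
    ((S R k).eval (f y * g x - 2) + (S R (k - 1)).eval (f y * g x - 2) - 1) • x +
      ((S R (k - 1)).eval (f y * g x - 2) * -g x) • y = 0 by
    rw [sub_smul, one_smul, sub_add_eq_add_sub, ← hx, sub_self])
  exact ⟨sub_eq_zero.mp hzero.1, by simpa using hzero.2⟩

-- `C k` evaluates to the trace of `(r₁ r₂) ^ k` on the plane spanned by `x` and `y`.
theorem eval_C_eq_two_of_reflection_mul_reflection_zpow_eq_one (hf : f x = 2) (hg : g y = 2)
    (hxy : LinearIndependent R ![x, y]) {k : ℤ} (h : (reflection hf * reflection hg) ^ k = 1) :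
    (C R k).eval (f y * g x - 2) = 2 := by
  have h₁ := (eval_S_of_reflection_mul_reflection_zpow_eq_one hf hg hxy h).1
  have h₂ := (eval_S_of_reflection_mul_reflection_zpow_eq_one hf hg hxy (k := -k)
    (by rw [zpow_neg, h, inv_one])).1
  rw [S_neg, S_neg_sub_one] at h₂
  simp only [C_eq_S_sub_X_mul_S, S_sub_two, Polynomial.eval_neg, Polynomial.eval_sub,
    Polynomial.eval_mul, Polynomial.eval_X, Polynomial.eval_ofNat] at h₂ ⊢
  linear_combination h₁ + h₂

end CommRing

section Real

open Real

theorem eval_S_sub_one_two_mul_cos_eq_zero {θ : ℝ} (hθ : sin θ ≠ 0) {q : ℤ} (hq : sin (q * θ) = 0) :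
    (S ℝ (q - 1)).eval (2 * cos θ) = 0 := by
  refine (mul_eq_zero_iff_right hθ).1 ?_
  rw [S_two_mul_real_cos]
  simpa using hq

theorem eval_S_add_eval_S_sub_one_two_mul_cos_eq_zero {θ : ℝ} (hθ : sin (2 * θ) ≠ 0) {q : ℤ}
    (hq : sin ((2 * q + 1) * θ) = 0) :
    (S ℝ q).eval (2 * cos (2 * θ)) + (S ℝ (q - 1)).eval (2 * cos (2 * θ)) = 0 := by
  refine (mul_eq_zero_iff_right hθ).1 ?_
  rw [add_mul, S_two_mul_real_cos, S_two_mul_real_cos]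
  have hadd : ((q : ℝ) + 1) * (2 * θ) = (2 * q + 1) * θ + θ := by ring
  have hsub : (((q - 1 : ℤ) : ℝ) + 1) * (2 * θ) = (2 * q + 1) * θ - θ := by push_cast; ring
  rw [hadd, hsub, sin_add, sin_sub, hq]
  ring

variable {V : Type*} [AddCommGroup V] [Module ℝ V] {x y : V} {f g : Dual ℝ V}

theorem reflection_mul_reflection_pow_eq_one (hf : f x = 2) (hg : g y = 2) {θ : ℝ}
    (hfg : f y * g x = 4 * cos θ ^ 2) (hθ : sin (2 * θ) ≠ 0) {m : ℕ} (hm : sin (m * θ) = 0) :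
    (reflection hf * reflection hg) ^ m = 1 := by
  have ht : 2 * cos (2 * θ) = f y * g x - 2 := by rw [hfg, cos_two_mul]; ring
  ext z
  rw [reflection_mul_reflection_pow_apply hf hg m z _ ht]
  obtain ⟨q, rfl | rfl⟩ := Nat.even_or_odd' m
  · have hS : (S ℝ (q - 1)).eval (2 * cos (2 * θ)) = 0 :=
      eval_S_sub_one_two_mul_cos_eq_zero hθ (by rw [← hm]; push_cast; ring_nf)
    have h₁ : (((2 * q : ℕ) : ℤ) - 1) / 2 = q - 1 := by omega
    have h₂ : (((2 * q : ℕ) : ℤ) - 2) / 2 = q - 1 := by omega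
    rw [h₁, h₂, hS]
    simp
  · have hS : (S ℝ q).eval (2 * cos (2 * θ)) + (S ℝ (q - 1)).eval (2 * cos (2 * θ)) = 0 :=
      eval_S_add_eval_S_sub_one_two_mul_cos_eq_zero hθ (by rw [← hm]; push_cast; ring_nf)
    have h₀ : ((2 * q + 1 : ℕ) : ℤ) / 2 = q := by omega
    have h₁ : (((2 * q + 1 : ℕ) : ℤ) - 1) / 2 = q := by omega
    have h₂ : (((2 * q + 1 : ℕ) : ℤ) - 2) / 2 = q - 1 := by omega
    have h₃ : (((2 * q + 1 : ℕ) : ℤ) - 3) / 2 = q - 1 := by omega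
    rw [h₀, h₁, h₂, h₃, hS]
    simp

end Real

end Reflections

section GeometricRepresentation

open Real Module

/-- The coroot of the generator `i` in the geometric representation `⨁ᵢ ℝ αᵢ`: the linear form
`αⱼ ↦ -2 cos (π / m(i,j))`. For `m(i,j) = ∞`, encoded as `M i j = 0`, the convention
`π / 0 = 0` gives the required value `-2`. -/
noncomputable def simpleCoroot (M : CoxeterMatrix B) (i : B) : Dual ℝ (B →₀ ℝ) :=
  Finsupp.linearCombination ℝ fun j => -2 * cos (π / M i j)

theorem simpleCoroot_single (M : CoxeterMatrix B) (i j : B) :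
    simpleCoroot M i (Finsupp.single j 1) = -2 * cos (π / M i j) := by
  simp [simpleCoroot]

theorem simpleCoroot_single_self (M : CoxeterMatrix B) (i : B) :
    simpleCoroot M i (Finsupp.single i 1) = 2 := by
  simp [simpleCoroot_single]

theorem simpleCoroot_single_mul_simpleCoroot_single (M : CoxeterMatrix B) (i j : B) :
    simpleCoroot M i (Finsupp.single j 1) * simpleCoroot M j (Finsupp.single i 1) =
      4 * cos (π / M i j) ^ 2 := by
  rw [simpleCoroot_single, simpleCoroot_single, M.symmetric j i]
  ring

/-- The reflection by which the generator `i` acts in the geometric representation. -/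
noncomputable def geomReflection (M : CoxeterMatrix B) (i : B) : (B →₀ ℝ) ≃ₗ[ℝ] (B →₀ ℝ) :=
  reflection (simpleCoroot_single_self M i)

theorem sin_two_mul_pi_div_ne_zero {m : ℕ} (hm : 3 ≤ m) : sin (2 * (π / m)) ≠ 0 := by
  have hm' : (3 : ℝ) ≤ m := by exact_mod_cast hm
  refine (sin_pos_of_pos_of_lt_pi (by positivity) ?_).ne'
  rw [← mul_div_assoc, div_lt_iff₀ (by linarith)]
  nlinarith [pi_pos]

theorem isLiftable_geomReflection (M : CoxeterMatrix B) : M.IsLiftable (geomReflection M) := by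
  intro i j
  obtain h | h | h | h : M i j = 0 ∨ M i j = 1 ∨ M i j = 2 ∨ 3 ≤ M i j := by omega
  · rw [h, pow_zero]
  · obtain rfl : i = j := by_contra fun hij => M.off_diagonal i j hij h
    rw [h, pow_one]
    exact LinearEquiv.ext (involutive_reflection (simpleCoroot_single_self M i))
  · rw [h]
    exact reflection_mul_reflection_sq_eq_one _ _ (by simp [simpleCoroot_single, h])
      (by simp [simpleCoroot_single, M.symmetric j i, h])
  · refine reflection_mul_reflection_pow_eq_one _ _
      (simpleCoroot_single_mul_simpleCoroot_single M i j) (sin_two_mul_pi_div_ne_zero h) ?_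
    have : (M i j : ℝ) ≠ 0 := by norm_cast; omega
    rw [mul_div_cancel₀ _ this, sin_pi]

theorem linearIndependent_pair_single {R ι : Type*} [Ring R] {i j : ι} (hij : i ≠ j) :
    LinearIndependent R ![Finsupp.single i (1 : R), Finsupp.single j 1] := by
  refine LinearIndependent.pair_iff.mpr fun a b hab => ?_
  have hi := DFunLike.congr_fun hab i
  have hj := DFunLike.congr_fun hab j
  simpa [hij, hij.symm] using And.intro hi hj

theorem dvd_of_cos_natCast_mul_two_pi_div_eq_one {k m : ℕ} (hm : m ≠ 0)
    (h : cos (k * (2 * (π / m))) = 1) : m ∣ k := by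
  obtain ⟨n, hn⟩ := (cos_eq_one_iff _).mp h
  have hm' : (m : ℝ) ≠ 0 := by exact_mod_cast hm
  have hk : (k : ℝ) = m * n := by
    field_simp at hn
    linarith
  exact Int.natCast_dvd_natCast.mp ⟨n, by exact_mod_cast hk⟩

theorem dvd_of_geomReflection_mul_pow_eq_one {i j : B} (hij : i ≠ j) {k : ℕ}
    (h : (geomReflection M i * geomReflection M j) ^ k = 1) : M i j ∣ k := by
  rw [← zpow_natCast] at h
  have hind := linearIndependent_pair_single (R := ℝ) hij
  have hprod := simpleCoroot_single_mul_simpleCoroot_single M i j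
  by_cases hM : M i j = 0
  · have hS := (eval_S_of_reflection_mul_reflection_zpow_eq_one _ _ hind h).2
    rw [hprod, simpleCoroot_single, M.symmetric j i, hM] at hS
    norm_num [Polynomial.Chebyshev.S_eval_two] at hS
    simp [hM, hS]
  · have hC := eval_C_eq_two_of_reflection_mul_reflection_zpow_eq_one _ _ hind h
    have ht : 4 * cos (π / M i j) ^ 2 - 2 = 2 * cos (2 * (π / M i j)) := by
      rw [cos_two_mul]; ring
    rw [hprod, ht, Polynomial.Chebyshev.C_two_mul_real_cos] at hC
    have hcos : cos (k * (2 * (π / M i j))) = 1 := by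
      rw [Int.cast_natCast] at hC
      linarith
    exact dvd_of_cos_natCast_mul_two_pi_div_eq_one hM hcos

theorem orderOf_simple_mul_simple (i j : B) :
    orderOf (cs.simple i * cs.simple j) = M i j := by
  refine Nat.dvd_antisymm (orderOf_dvd_of_pow_eq_one (cs.simple_mul_simple_pow i j)) ?_
  obtain rfl | hij := eq_or_ne i j
  · simp
  · refine dvd_of_geomReflection_mul_pow_eq_one hij ?_
    have h := congrArg (cs.lift ⟨_, isLiftable_geomReflection M⟩)
      (pow_orderOf_eq_one (cs.simple i * cs.simple j))
    rwa [map_pow, map_mul, cs.lift_apply_simple, cs.lift_apply_simple, map_one] at h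

theorem simple_injective : Function.Injective cs.simple := by
  intro i j h
  by_contra hij
  refine M.off_diagonal i j hij ?_
  rw [← orderOf_simple_mul_simple cs, h, cs.simple_mul_simple_self, orderOf_one]

end GeometricRepresentation


section AlternatingWord

theorem prod_map_reverse_alternatingWord_two_mul {G : Type*} [Monoid G] (f : B → G) (i j : B)
    (m : ℕ) : ((alternatingWord i j (2 * m)).reverse.map f).prod = (f j * f i) ^ m := by
  induction m with
  | zero => simp [alternatingWord]
  | succ m ih =>
    rw [mul_add_one, alternatingWord_succ, alternatingWord_succ, pow_succ', ← ih]
    simp [mul_assoc]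

theorem leftInvSeq_reverse_alternatingWord (i j : B) (m : ℕ) :
    cs.leftInvSeq (alternatingWord i j m).reverse =
      (List.range m).map fun k => (cs.simple j * cs.simple i) ^ k * cs.simple j := by
  induction m generalizing i j with
  | zero => simp [alternatingWord]
  | succ m ih =>
    have hconj : ∀ k : ℕ, MulAut.conj (cs.simple j)
        ((cs.simple i * cs.simple j) ^ k * cs.simple i) =
          (cs.simple j * cs.simple i) ^ (k + 1) * cs.simple j := fun k => by
      rw [MulAut.conj_apply, cs.inv_simple, ← mul_assoc, ← mul_pow_mul, mul_assoc _ (cs.simple j),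
        ← pow_succ]
    simp only [alternatingWord_succ, List.concat_eq_append, List.reverse_append,
      List.reverse_singleton, List.singleton_append, leftInvSeq, ih, List.map_map,
      List.range_succ_eq_map, List.map_cons, pow_zero, one_mul]
    exact congrArg _ (List.map_congr_left fun k _ => hconj k)

theorem even_count_leftInvSeq_reverse_alternatingWord [DecidableEq W] (i j : B) (t : W) :
    Even ((cs.leftInvSeq (alternatingWord i j (2 * M i j)).reverse).count t) := by
  have hperiod : (fun k => (cs.simple j * cs.simple i) ^ k * cs.simple j) ∘ (M i j + ·) =
      fun k => (cs.simple j * cs.simple i) ^ k * cs.simple j := by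
    ext k
    simp [pow_add]
  rw [leftInvSeq_reverse_alternatingWord, two_mul, List.range_add, List.map_append, List.map_map,
    hperiod, List.count_append]
  exact ⟨_, rfl⟩

theorem nodup_leftInvSeq_reverse_alternatingWord {i j : B} {m : ℕ}
    (hm : M i j = 0 ∨ m ≤ M i j) : (cs.leftInvSeq (alternatingWord i j m).reverse).Nodup := by
  rw [leftInvSeq_reverse_alternatingWord]
  refine List.nodup_range.map_on fun k hk l hl hkl => ?_
  have hmod := pow_eq_pow_iff_modEq.mp (mul_right_cancel hkl)
  rw [orderOf_simple_mul_simple, M.symmetric] at hmod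
  rw [List.mem_range] at hk hl
  obtain h0 | hle := hm
  · rwa [h0, Nat.modEq_zero_iff] at hmod
  · exact hmod.eq_of_lt_of_lt (hk.trans_le hle) (hl.trans_le hle)

end AlternatingWord

section InversionSign

/-- The action of a group on the functions `G → N` induced by conjugation on `G`. -/
def conjArrow (G N : Type*) [Group G] [Monoid N] : G →* MulAut (G → N) :=
  mulAutArrow.comp (ConjAct.toConjAct : G ≃* ConjAct G).toMonoidHom

theorem conjArrow_apply {G N : Type*} [Group G] [Monoid N] (x : G) (f : G → N) (t : G) :
    conjArrow G N x f t = f (x⁻¹ * t * x) := by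
  change f ((ConjAct.toConjAct x)⁻¹ • t) = _
  rw [← map_inv, ConjAct.toConjAct_smul, inv_inv]

open scoped Classical in
/-- The image of a generator under `inversionSignHom`. -/
noncomputable def signedSimple (i : B) : (W → ℤˣ) ⋊[conjArrow W ℤˣ] W :=
  ⟨Pi.mulSingle (cs.simple i) (-1), cs.simple i⟩

open scoped Classical in
theorem prod_map_signedSimple (ω : List B) :
    (ω.map (signedSimple cs)).prod =
      ⟨fun t => (-1) ^ (cs.leftInvSeq ω).count t, cs.wordProd ω⟩ := by
  induction ω with
  | nil => simp; rfl
  | cons i ω ih =>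
    rw [List.map_cons, List.prod_cons, ih]
    refine SemidirectProduct.ext (funext fun t => ?_) (cs.wordProd_cons i ω).symm
    have hcount : ((cs.leftInvSeq ω).map (MulAut.conj (cs.simple i))).count t =
        (cs.leftInvSeq ω).count ((cs.simple i)⁻¹ * t * cs.simple i) := by
      have h := List.count_map_of_injective (cs.leftInvSeq ω) _
        (MulAut.conj (cs.simple i)).injective ((cs.simple i)⁻¹ * t * cs.simple i)
      simpa [mul_assoc] using h
    simp only [signedSimple, SemidirectProduct.mul_left, Pi.mul_apply, conjArrow_apply, leftInvSeq,
      List.count_cons, hcount, pow_add, beq_iff_eq, Pi.mulSingle_apply, eq_comm (a := t)]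
    split_ifs <;> simp

theorem isLiftable_signedSimple : M.IsLiftable (signedSimple cs) := by
  classical
  intro i j
  rw [M.symmetric i j, ← prod_map_reverse_alternatingWord_two_mul, prod_map_signedSimple]
  refine SemidirectProduct.ext (funext fun t => ?_) ?_
  · exact (even_count_leftInvSeq_reverse_alternatingWord cs j i t).neg_one_pow
  · simp [cs.prod_alternatingWord_eq_mul_pow]

/-- The homomorphism sending `w` to `(t ↦ η(w, t), w)`, where `η(w, t)` is the sign
`inversionSign`. -/
noncomputable def inversionSignHom : W →* (W → ℤˣ) ⋊[conjArrow W ℤˣ] W :=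
  cs.lift ⟨signedSimple cs, isLiftable_signedSimple cs⟩

open scoped Classical in
theorem inversionSignHom_wordProd (ω : List B) :
    inversionSignHom cs (cs.wordProd ω) =
      ⟨fun t => (-1) ^ (cs.leftInvSeq ω).count t, cs.wordProd ω⟩ := by
  rw [← prod_map_signedSimple, wordProd, map_list_prod, List.map_map]
  congr 2
  ext1 i
  exact cs.lift_apply_simple (isLiftable_signedSimple cs) i

/-- The sign `η(w, t)`, equal to `-1` exactly when `t` is a left inversion of `w`: the parity of
the number of occurrences of `t` in the left inversion sequence of any word for `w`. -/
noncomputable def inversionSign (w t : W) : ℤˣ := (inversionSignHom cs w).left t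

open scoped Classical in
theorem inversionSign_wordProd (ω : List B) (t : W) :
    inversionSign cs (cs.wordProd ω) t = (-1) ^ (cs.leftInvSeq ω).count t := by
  rw [inversionSign, inversionSignHom_wordProd]

theorem inversionSign_mul (x y t : W) :
    inversionSign cs (x * y) t = inversionSign cs x t * inversionSign cs y (x⁻¹ * t * x) := by
  obtain ⟨ω, rfl⟩ := cs.wordProd_surjective x
  simp only [inversionSign, map_mul, SemidirectProduct.mul_left, Pi.mul_apply]
  rw [inversionSignHom_wordProd, conjArrow_apply]

theorem inversionSign_simple_self (i : B) :
    inversionSign cs (cs.simple i) (cs.simple i) = -1 := by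
  classical
  rw [← cs.wordProd_singleton, inversionSign_wordProd]
  simp

theorem inversionSign_self {t : W} (ht : cs.IsReflection t) : inversionSign cs t t = -1 := by
  obtain ⟨u, i, rfl⟩ := ht
  have hcancel : inversionSign cs u (u * cs.simple i * u⁻¹) *
      inversionSign cs u⁻¹ (cs.simple i) = 1 := by
    have h := inversionSign_mul cs u u⁻¹ (u * cs.simple i * u⁻¹)
    rw [mul_inv_cancel, inversionSign, map_one] at h
    simpa [mul_assoc] using h.symm
  rw [inversionSign_mul, inversionSign_mul]
  simpa [mul_assoc, inversionSign_simple_self, mul_comm] using hcancel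

theorem mem_leftInvSeq_of_inversionSign_eq_neg_one {ω : List B} {t : W}
    (h : inversionSign cs (cs.wordProd ω) t = -1) : t ∈ cs.leftInvSeq ω := by
  classical
  by_contra hmem
  rw [inversionSign_wordProd, List.count_eq_zero_of_not_mem hmem] at h
  exact absurd h (by decide)

theorem isLeftInversion_of_inversionSign_eq_neg_one {w t : W} (h : inversionSign cs w t = -1) :
    cs.IsLeftInversion w t := by
  obtain ⟨ω, hω, rfl⟩ := cs.exists_isReduced w
  exact cs.isLeftInversion_of_mem_leftInvSeq hω (mem_leftInvSeq_of_inversionSign_eq_neg_one cs h)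

theorem isLeftInversion_iff_inversionSign_eq_neg_one {w t : W} :
    cs.IsLeftInversion w t ↔ inversionSign cs w t = -1 := by
  refine ⟨fun h => ?_, isLeftInversion_of_inversionSign_eq_neg_one cs⟩
  have hnot : ¬ cs.IsLeftInversion (t * w) t := h.1.isLeftInversion_mul_right_iff.not_left.mpr h
  have hsign := (Int.units_eq_one_or _).resolve_right
    (mt (isLeftInversion_of_inversionSign_eq_neg_one cs) hnot)
  have hmul := inversionSign_mul cs t (t * w) t
  rwa [← mul_assoc, h.1.mul_self, one_mul, inversionSign_self cs h.1, inv_mul_cancel, one_mul,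
    hsign, mul_one] at hmul

theorem mem_leftInvSeq_of_isLeftInversion {ω : List B} {t : W}
    (h : cs.IsLeftInversion (cs.wordProd ω) t) : t ∈ cs.leftInvSeq ω :=
  mem_leftInvSeq_of_inversionSign_eq_neg_one cs
    ((isLeftInversion_iff_inversionSign_eq_neg_one cs).mp h)

theorem isReduced_of_nodup_leftInvSeq {ω : List B} (h : (cs.leftInvSeq ω).Nodup) :
    cs.IsReduced ω := by
  classical
  obtain ⟨ω', hω', hprod⟩ := cs.exists_isReduced (cs.wordProd ω)
  have hsub : cs.leftInvSeq ω ⊆ cs.leftInvSeq ω' := fun t ht => by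
    refine mem_leftInvSeq_of_inversionSign_eq_neg_one cs ?_
    rw [← hprod, inversionSign_wordProd, List.count_eq_one_of_mem h ht, pow_one]
  have hle := (h.subperm hsub).length_le
  rw [cs.length_leftInvSeq, cs.length_leftInvSeq, ← hω'.eq, ← hprod] at hle
  exact le_antisymm (cs.length_wordProd_le ω) hle

theorem finite_leftDescents (w : W) : (leftDescents cs w).Finite := by
  obtain ⟨ω, rfl⟩ := cs.wordProd_surjective w
  refine Set.Finite.of_finite_image ?_ (simple_injective cs).injOn (f := cs.simple)
  refine (cs.leftInvSeq ω).finite_toSet.subset ?_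
  rintro _ ⟨i, hi, rfl⟩
  exact mem_leftInvSeq_of_isLeftInversion cs
    ((cs.isLeftInversion_simple_iff_isLeftDescent _ i).mpr hi)

end InversionSign

section ReducedWords

theorem isReduced_alternatingWord {i j : B} {m : ℕ} (hm : M i j = 0 ∨ m ≤ M i j) :
    cs.IsReduced (alternatingWord i j m) := by
  rw [← cs.isReduced_reverse_iff]
  exact isReduced_of_nodup_leftInvSeq cs (nodup_leftInvSeq_reverse_alternatingWord cs hm)

theorem simple_mul_simple_comm_of_eq_two {i j : B} (h : M i j = 2) :
    cs.simple i * cs.simple j = cs.simple j * cs.simple i := by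
  have hsq := cs.simple_mul_simple_pow i j
  rw [h, pow_two, mul_eq_one_iff_eq_inv, mul_inv_rev, cs.inv_simple, cs.inv_simple] at hsq
  exact hsq

theorem leftInvSeq_eq_map_simple {ω : List B} (h : ω.Pairwise (M · · = 2)) :
    cs.leftInvSeq ω = ω.map cs.simple := by
  induction ω with
  | nil => rfl
  | cons i ω ih =>
    rw [List.pairwise_cons] at h
    rw [leftInvSeq, ih h.2, List.map_map, List.map_cons]
    refine congrArg _ (List.map_congr_left fun j hj => ?_)
    simp [simple_mul_simple_comm_of_eq_two cs (h.1 j hj)]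

theorem nodup_of_pairwise_eq_two {ω : List B} (h : ω.Pairwise (M · · = 2)) : ω.Nodup :=
  h.imp fun {i j} hij => by
    rintro rfl
    simp at hij

theorem isReduced_of_pairwise_eq_two {ω : List B} (h : ω.Pairwise (M · · = 2)) :
    cs.IsReduced ω := by
  refine isReduced_of_nodup_leftInvSeq cs ?_
  rw [leftInvSeq_eq_map_simple cs h]
  exact (nodup_of_pairwise_eq_two h).map (simple_injective cs)

end ReducedWords

section WeakOrder

/-- The right weak order: `x ≤ w` when `w` is a reduced product `x · y`. The factor `y` can only be
`x⁻¹ * w`. -/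
def RightWeakLE (x w : W) : Prop := cs.length x + cs.length (x⁻¹ * w) = cs.length w

theorem RightWeakLE.one_left (w : W) : RightWeakLE cs 1 w := by
  simp [RightWeakLE]

variable {cs}

theorem RightWeakLE.length_le {x w : W} (h : RightWeakLE cs x w) : cs.length x ≤ cs.length w :=
  (Nat.le_add_right _ _).trans_eq h

-- The left inversions of a reduced product `x * y` are those of `x` and the conjugates by `x` of
-- those of `y`, so the reflection `s i`, not being one of `x`, can be cancelled inside `y`.
theorem RightWeakLE.simple_mul {x w : W} {i : B} (h : RightWeakLE cs x w)
    (hw : cs.IsLeftDescent w i) (hx : ¬ cs.IsLeftDescent x i) :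
    RightWeakLE cs (cs.simple i * x) w := by
  rw [← cs.isLeftInversion_simple_iff_isLeftDescent,
    isLeftInversion_iff_inversionSign_eq_neg_one] at hw hx
  have hmul := inversionSign_mul cs x (x⁻¹ * w) (cs.simple i)
  rw [mul_inv_cancel_left, hw, (Int.units_eq_one_or _).resolve_right hx, one_mul] at hmul
  have hlt := (isLeftInversion_of_inversionSign_eq_neg_one cs hmul.symm).2
  have hfactor : x⁻¹ * cs.simple i * x * (x⁻¹ * w) = (cs.simple i * x)⁻¹ * w := by
    simp [mul_assoc]
  rw [hfactor] at hlt
  have hle := cs.length_mul_le (cs.simple i * x) ((cs.simple i * x)⁻¹ * w)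
  rw [mul_inv_cancel_left] at hle
  have hsx := cs.length_mul_le (cs.simple i) x
  rw [cs.length_simple] at hsx
  unfold RightWeakLE at h ⊢
  omega

theorem rightWeakLE_wordProd_of_forall_isLeftDescent {ω : List B} {w : W} (hω : cs.IsReduced ω)
    (hw : ∀ i ∈ ω, cs.IsLeftDescent w i) : RightWeakLE cs (cs.wordProd ω) w := by
  induction ω with
  | nil => exact .one_left cs w
  | cons i ω ih =>
    have hred : cs.IsReduced ω := hω.drop 1
    rw [List.forall_mem_cons] at hw
    rw [cs.wordProd_cons]
    refine (ih hred hw.2).simple_mul hw.1 (cs.not_isLeftDescent_iff.mpr ?_)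
    rw [← cs.wordProd_cons, hω.eq, hred.eq, List.length_cons]

theorem mem_pair_of_mem_alternatingWord {i j k : B} {m : ℕ} (h : k ∈ alternatingWord i j m) :
    k = i ∨ k = j := by
  induction m generalizing i j with
  | zero => simp [alternatingWord] at h
  | succ m ih =>
    rw [alternatingWord_succ, List.concat_eq_append, List.mem_append, List.mem_singleton] at h
    exact h.elim (fun h => (ih h).symm) .inr

theorem rightWeakLE_wordProd_alternatingWord {w : W} {i j : B} (hi : cs.IsLeftDescent w i)
    (hj : cs.IsLeftDescent w j) {m : ℕ} (hm : M i j = 0 ∨ m ≤ M i j) :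
    RightWeakLE cs (cs.wordProd (alternatingWord i j m)) w :=
  rightWeakLE_wordProd_of_forall_isLeftDescent (isReduced_alternatingWord cs hm) fun k hk => by
    obtain rfl | rfl := mem_pair_of_mem_alternatingWord hk
    exacts [hi, hj]

end WeakOrder

section FullyCommutative

variable {cs}

theorem ne_zero_of_isLeftDescent {w : W} {i j : B} (hi : cs.IsLeftDescent w i)
    (hj : cs.IsLeftDescent w j) : M i j ≠ 0 := by
  intro h0
  have hle := (rightWeakLE_wordProd_alternatingWord hi hj (m := cs.length w + 1)
    (.inl h0)).length_le
  rw [(isReduced_alternatingWord cs (.inl h0)).eq, length_alternatingWord] at hle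
  omega

theorem FullyComm.eq_two_of_isLeftDescent {w : W} (hw : FullyComm cs w) {i j : B} (hij : i ≠ j)
    (hi : cs.IsLeftDescent w i) (hj : cs.IsLeftDescent w j) : M i j = 2 := by
  by_contra h2
  have h0 := ne_zero_of_isLeftDescent hi hj
  have h1 := M.off_diagonal i j hij
  have hle : RightWeakLE cs (longest cs i j) w :=
    rightWeakLE_wordProd_alternatingWord hi hj (.inr le_rfl)
  refine hw ⟨i, j, by omega, 1, (longest cs i j)⁻¹ * w, by simp, ?_⟩
  rw [cs.length_one, zero_add]
  exact hle.symm

theorem longest_inv (s t : B) : (longest cs s t)⁻¹ = longest cs s t := by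
  rw [longest, cs.prod_alternatingWord_eq_mul_pow]
  split_ifs with h
  · rw [one_mul, inv_eq_iff_mul_eq_one, ← pow_add, ← two_mul, Nat.two_mul_div_two_of_even h,
      cs.simple_mul_simple_pow]
  · rw [mul_inv_rev, ← inv_pow, mul_inv_rev, cs.inv_simple, cs.inv_simple, mul_pow_mul]

theorem IsComplex.inv {w : W} (hw : IsComplex cs w) : IsComplex cs w⁻¹ := by
  obtain ⟨s, t, hst, x₁, x₂, rfl, hl⟩ := hw
  refine ⟨s, t, hst, x₂⁻¹, x₁⁻¹, ?_, ?_⟩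
  · rw [mul_inv_rev, mul_inv_rev, longest_inv, mul_assoc]
  · rw [cs.length_inv, cs.length_inv, cs.length_inv, hl]
    ring

theorem FullyComm.inv {w : W} (hw : FullyComm cs w) : FullyComm cs w⁻¹ :=
  fun h => hw (by simpa using h.inv)

theorem IsCommProd.inv {x : W} (hx : IsCommProd cs x) : IsCommProd cs x⁻¹ := by
  obtain ⟨l, hnd, hcomm, hred, rfl⟩ := hx
  exact ⟨l.reverse, by simpa using hnd, by simpa using hcomm, hred.reverse, by simp⟩

theorem isCommProd_wordProd {l : List B} (h : l.Pairwise (M · · = 2)) :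
    IsCommProd cs (cs.wordProd l) := by
  refine ⟨l, nodup_of_pairwise_eq_two h, ?_, isReduced_of_pairwise_eq_two cs h, rfl⟩
  have : Std.Symm (M · · = 2) := ⟨fun u v huv => (M.symmetric v u).trans huv⟩
  exact fun u hu v hv huv => h.forall hu hv huv

theorem RightWeakLE.length_le_nval {x w : W} (h : RightWeakLE cs x w) (hx : IsCommProd cs x) :
    cs.length x ≤ nval cs w := by
  refine le_csSup ⟨cs.length w, ?_⟩ ⟨1, x, x⁻¹ * w, by simp, ?_, hx, rfl⟩
  · rintro k ⟨w₁, w₂, w₃, -, hl, -, rfl⟩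
    omega
  · rw [cs.length_one, zero_add]
    exact h.symm

theorem nval_inv (w : W) : nval cs w⁻¹ = nval cs w := by
  have hinv : ∀ {w : W} {k : ℕ}, (∃ w₁ w₂ w₃ : W, w = w₁ * w₂ * w₃ ∧
      cs.length w = cs.length w₁ + cs.length w₂ + cs.length w₃ ∧
      IsCommProd cs w₂ ∧ cs.length w₂ = k) → ∃ w₁ w₂ w₃ : W, w⁻¹ = w₁ * w₂ * w₃ ∧
      cs.length w⁻¹ = cs.length w₁ + cs.length w₂ + cs.length w₃ ∧
      IsCommProd cs w₂ ∧ cs.length w₂ = k := by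
    rintro _ k ⟨w₁, w₂, w₃, rfl, hl, hw₂, hk⟩
    refine ⟨w₃⁻¹, w₂⁻¹, w₁⁻¹, by simp [mul_assoc], ?_, hw₂.inv, by rwa [cs.length_inv]⟩
    simp only [cs.length_inv, hl]
    ring
  refine congrArg sSup (Set.ext fun k => ⟨fun h => ?_, hinv⟩)
  simpa only [inv_inv, Set.mem_ofPred_eq] using hinv h

theorem leftDescents_inv (w : W) : leftDescents cs w⁻¹ = rightDescents cs w :=
  Set.ext fun _ => cs.isLeftDescent_inv_iff

theorem FullyComm.ncard_leftDescents_le_nval {w : W} (hw : FullyComm cs w) :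
    (leftDescents cs w).ncard ≤ nval cs w := by
  set l := (finite_leftDescents cs w).toFinset.toList with hl
  have hmem : ∀ i ∈ l, cs.IsLeftDescent w i := fun i hi => by simpa [hl, leftDescents] using hi
  have hcomm : l.Pairwise (M · · = 2) :=
    (Finset.nodup_toList _).pairwise_of_forall_ne fun i hi j hj hij =>
      hw.eq_two_of_isLeftDescent hij (hmem i hi) (hmem j hj)
  have hred := isReduced_of_pairwise_eq_two cs hcomm
  calc (leftDescents cs w).ncard = l.length := by
        rw [Set.ncard_eq_toFinset_card _ (finite_leftDescents cs w), hl, Finset.length_toList]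
    _ = cs.length (cs.wordProd l) := hred.eq.symm
    _ ≤ nval cs w :=
      (rightWeakLE_wordProd_of_forall_isLeftDescent hred hmem).length_le_nval
        (isCommProd_wordProd hcomm)

end FullyCommutative


/-- For any fully commutative `w` we have `|𝓛(w)| ≤ n(w)` and `|𝓡(w)| ≤ n(w)`. -/
theorem statement15 (w : W) (hw : FullyComm cs w) :
    (leftDescents cs w).ncard ≤ nval cs w ∧ (rightDescents cs w).ncard ≤ nval cs w := by
  refine ⟨hw.ncard_leftDescents_le_nval, ?_⟩
  rw [← leftDescents_inv, ← nval_inv]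
  exact hw.inv.ncard_leftDescents_le_nval
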